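/- Let j = min{i ∈ [t] : m_i = m_t} and let d = n_1 + ... + n_{j−1} + 1. Suppose that n_i ≤ m_t for all i ∈ [t] and that q > t. Then there exist MSRD codes 𝒞_n ⊆ 𝒞_{n−1} ⊆ ... ⊆ 𝒞_{d+1} ⊆ 𝒞_d ⊆ 𝕄 with d(𝒞_i) = i for all d ≤ i ≤ n, where n = n_1 + ... + n_t. -/

import Mathlib

open Module

variable {F : Type*} [Field F] [Fintype F] {t : ℕ} {m n : Fin t → ℕ}

/-- The sum-rank weight of an element of `𝕄 = F^{m 0 × n 0} × ⋯ × F^{m (t-1) × n (t-1)}`. -/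
noncomputable def srk (C : ∀ i : Fin t, Matrix (Fin (m i)) (Fin (n i)) F) : ℕ :=
  ∑ i, (C i).rank

/-- The maximum sum-rank of a code. -/
noncomputable def maxsrk (𝒞 : Submodule F (∀ i : Fin t, Matrix (Fin (m i)) (Fin (n i)) F)) : ℕ :=
  sSup {w | ∃ C ∈ 𝒞, srk C = w}

/-- The minimum distance of a code. -/
noncomputable def minDist (𝒞 : Submodule F (∀ i : Fin t, Matrix (Fin (m i)) (Fin (n i)) F)) : ℕ :=
  sInf {w | ∃ C ∈ 𝒞, C ≠ 0 ∧ srk C = w}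

/-- The maximum rank of a subspace of a matrix space. -/
noncomputable def maxrank {a b : ℕ} (𝒜 : Submodule F (Matrix (Fin a) (Fin b) F)) : ℕ :=
  sSup {w | ∃ A ∈ 𝒜, A.rank = w}

/-- Optimal anticodes in a single matrix space. -/
def IsOptAnticode {a b : ℕ} (𝒜 : Submodule F (Matrix (Fin a) (Fin b) F)) : Prop :=
  Module.finrank F 𝒜 = a * maxrank 𝒜

/-- The weight of a sum-rank metric code: the minimum of `maxsrk` over products of
optimal anticodes containing it. -/
noncomputable def codeWt (𝒞 : Submodule F (∀ i : Fin t, Matrix (Fin (m i)) (Fin (n i)) F)) : ℕ :=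
  sInf {w | ∃ 𝒜 : ∀ i : Fin t, Submodule F (Matrix (Fin (m i)) (Fin (n i)) F),
    (∀ i, IsOptAnticode (𝒜 i)) ∧ 𝒞 ≤ Submodule.pi Set.univ 𝒜 ∧
      maxsrk (Submodule.pi Set.univ 𝒜) = w}

/-- The `r`-th generalized sum-rank weight of a code. -/
noncomputable def gw (𝒞 : Submodule F (∀ i : Fin t, Matrix (Fin (m i)) (Fin (n i)) F))
    (r : ℕ) : ℕ :=
  sInf {w | ∃ 𝒟 : Submodule F (∀ i : Fin t, Matrix (Fin (m i)) (Fin (n i)) F),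
    𝒟 ≤ 𝒞 ∧ r ≤ Module.finrank F 𝒟 ∧ codeWt 𝒟 = w}

/-- Maximum sum-rank distance (MSRD) codes. -/
def IsMSRD (𝒞 : Submodule F (∀ i : Fin t, Matrix (Fin (m i)) (Fin (n i)) F)) : Prop :=
  ∃ j : Fin t, ∃ δ : ℕ, δ + 1 ≤ n j ∧
    minDist 𝒞 = ∑ i ∈ Finset.Iio j, n i + δ + 1 ∧
    Module.finrank F 𝒞 + δ * m j = ∑ i ∈ Finset.Ici j, m i * n i

/-!
Let `L / F` be the extension of degree `M = m_t`, with Frobenius `σ`, and let `a_1, …, a_t ∈ Lˣ`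
have distinct norms, which is possible because `t < q`. If a skew polynomial `f ≠ 0` of degree
less than `k` has a root `β ≠ 0` at `a_i σ`, then `f = g (X - b)` with `b = a_i σ(β) / β`. The
kernel of `a_l σ - b` is a line if `l = i` and, the norms being distinct, zero if `l ≠ i`. By
induction on `k`, the kernels of `f(a_1 σ), …, f(a_t σ)` have total dimension less than `k`.

Every `n_i` is at most `M`, and every `m_i` at least `M`, so each `f(a_i σ)` restricts to an
`n_i`-dimensional subspace of `L` and expands to an `m_i × n_i` matrix over `F`. The tuples coming
from `deg f < k` form a code of dimension `k M`, and these codes are nested. The root bound gives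
minimum distance at least `n - k + 1`, and a nonzero `f` vanishing at `k - 1` chosen basis vectors
attains it. For such distances from `d` on, only blocks with `m_i = M` enter the MSRD dimension,
which is then also `k M`.
-/

section SkewEval

open Polynomial

variable {R A V : Type*} [CommRing R] [Ring A] [AddCommGroup V] [Module R V] [Module A V]

lemma pow_smul_of_semilinear {σ : A →+* A} {T : Module.End R V}
    (hT : ∀ (c : A) v, T (c • v) = σ c • T v) (s : ℕ) (c : A) (v : V) :
    (T ^ s) (c • v) = σ^[s] c • (T ^ s) v := by
  induction s with
  | zero => rfl
  | succ s ih =>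
    rw [pow_succ', Module.End.mul_apply, ih, hT, Function.iterate_succ_apply',
      Module.End.mul_apply]

variable [SMulCommClass R A V]

/-- The operator `∑ c_s • T ^ s` obtained by evaluating the skew polynomial `∑ c_s X ^ s` at `T`.
A skew polynomial is stored as the ordinary polynomial with the same left coefficients: only the
left module structure and the degree of `A[X]` are used, never its commutative product. -/
noncomputable def skewEval (T : Module.End R V) : A[X] →ₗ[A] Module.End R V :=
  lsum fun s => LinearMap.toSpanSingleton A (Module.End R V) (T ^ s)

lemma skewEval_monomial (T : Module.End R V) (s : ℕ) (c : A) :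
    skewEval T (monomial s c) = c • T ^ s := by
  simp [skewEval, lsum_apply, sum_monomial_index]

lemma skewEval_C (T : Module.End R V) (c : A) : skewEval T (C c) = c • 1 := by
  rw [← monomial_zero_left, skewEval_monomial, pow_zero]

/-- Right multiplication by `X - b` in the skew polynomial ring `A[X; σ]`, where `X c = σ c X`. -/
noncomputable def mulXSub (σ : A →+* A) (b : A) : A[X] →ₗ[A] A[X] :=
  lsum fun s => LinearMap.toSpanSingleton A A[X] (X ^ (s + 1) - monomial s (σ^[s] b))

lemma mulXSub_monomial (σ : A →+* A) (b c : A) (s : ℕ) :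
    mulXSub σ b (monomial s c) = monomial (s + 1) c - monomial s (c * σ^[s] b) := by
  simp [mulXSub, lsum_apply, sum_monomial_index, smul_sub, smul_monomial, X_pow_eq_monomial]

lemma skewEval_mulXSub {σ : A →+* A} {T : Module.End R V}
    (hT : ∀ (c : A) v, T (c • v) = σ c • T v) (b : A) (g : A[X]) :
    skewEval T (mulXSub σ b g) = skewEval T g ∘ₗ (T - b • 1) := by
  induction g using Polynomial.induction_on' with
  | add p q hp hq => rw [map_add, map_add, hp, hq, map_add, LinearMap.add_comp]
  | monomial s c =>
    ext v
    simp only [mulXSub_monomial, map_sub, skewEval_monomial, LinearMap.comp_apply,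
      LinearMap.sub_apply, LinearMap.smul_apply, Module.End.one_apply,
      pow_smul_of_semilinear hT, pow_succ, Module.End.mul_apply, mul_smul]

lemma exists_eq_mulXSub_add_C (σ : A →+* A) (b : A) {k : ℕ} {f : A[X]}
    (hf : f ∈ degreeLT A (k + 1)) : ∃ g ∈ degreeLT A k, ∃ c, f = mulXSub σ b g + C c := by
  induction k generalizing f with
  | zero =>
    refine ⟨0, zero_mem _, f.coeff 0, ?_⟩
    rw [map_zero, zero_add]
    exact eq_C_of_degree_le_zero (by simpa [degreeLT_succ_eq_degreeLE, mem_degreeLE] using hf)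
  | succ k ih =>
    set lead : A[X] := monomial k (f.coeff (k + 1)) with hlead
    have hrest : f - mulXSub σ b lead ∈ degreeLT A (k + 1) := by
      rw [mem_degreeLT, degree_lt_iff_coeff_zero] at hf ⊢
      intro s hs
      rw [hlead, mulXSub_monomial, coeff_sub, coeff_sub, coeff_monomial, coeff_monomial,
        if_neg (by omega : k ≠ s)]
      split_ifs with hks
      · simp [hks]
      · simp [hf s (by omega)]
    obtain ⟨g, hg, c, hgc⟩ := ih hrest
    refine ⟨lead + g, add_mem (mem_degreeLT.2 ?_) (degreeLT_mono k.le_succ hg), c, ?_⟩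
    · exact (degree_monomial_le _ _).trans_lt (by exact_mod_cast k.lt_succ_self)
    · rw [map_add, add_assoc, ← hgc, add_sub_cancel]

end SkewEval

lemma finrank_ker_comp_le {K U V W : Type*} [DivisionRing K] [AddCommGroup U] [Module K U]
    [AddCommGroup V] [Module K V] [AddCommGroup W] [Module K W] [FiniteDimensional K U]
    [FiniteDimensional K V] (g : V →ₗ[K] W) (f : U →ₗ[K] V) :
    finrank K (LinearMap.ker (g ∘ₗ f)) ≤
      finrank K (LinearMap.ker g) + finrank K (LinearMap.ker f) := by
  set P := LinearMap.ker (g ∘ₗ f)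
  have hrange : LinearMap.range (f.domRestrict P) ≤ LinearMap.ker g := by
    rintro _ ⟨x, rfl⟩
    exact x.2
  have hker : finrank K (LinearMap.ker (f.domRestrict P)) = finrank K (LinearMap.ker f) :=
    (Submodule.comapSubtypeEquivOfLe (LinearMap.ker_le_ker_comp f g)).finrank_eq
  rw [← LinearMap.finrank_range_add_finrank_ker (f.domRestrict P), hker]
  exact Nat.add_le_add_right (Submodule.finrank_mono hrange) _

section RootBound

open Polynomial

variable {K L ι : Type*} [Field K] [Field L] [Algebra K L] [Fintype ι]

/-- A family of operators is root bounded if a nonzero skew polynomial of degree less than `k` has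
fewer than `k` roots, counted as the total dimension over `K` of the kernels of its values. -/
def IsRootBounded (T : ι → Module.End K L) : Prop :=
  ∀ k, ∀ f ∈ degreeLT L k, f ≠ 0 → ∑ i, finrank K (LinearMap.ker (skewEval (T i) f)) < k

theorem isRootBounded_of_semilinear [FiniteDimensional K L] {σ : L →+* L}
    {T : ι → Module.End K L} (hT : ∀ i c v, T i (c • v) = σ c • T i v)
    (heig : ∀ b : L, ∑ i, finrank K (LinearMap.ker (T i - b • 1)) ≤ 1) : IsRootBounded T := by
  intro k
  induction k with
  | zero =>
    intro f hf hf0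
    exact absurd (by simpa [mem_degreeLT, Nat.WithBot.lt_zero_iff] using hf) hf0
  | succ k ih =>
    intro f hf hf0
    by_cases hroot : ∀ i, LinearMap.ker (skewEval (T i) f) = ⊥
    · rw [Finset.sum_eq_zero fun i _ => by rw [hroot i, finrank_bot]]
      exact k.succ_pos
    obtain ⟨i, hi⟩ := not_forall.1 hroot
    obtain ⟨β, hβ, hβ0⟩ := Submodule.exists_mem_ne_zero_of_ne_bot hi
    -- `X - b` with this `b` is the monic skew polynomial of degree one that vanishes at `β`.
    set b := T i β / β
    obtain ⟨g, hg, c, rfl⟩ := exists_eq_mulXSub_add_C σ b hf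
    obtain rfl : c = 0 := by
      have hb : (T i - b • 1) β = 0 := by simp [b, hβ0]
      simpa [skewEval_mulXSub (hT i), skewEval_C, hb, hβ0] using hβ
    rw [map_zero, add_zero] at hf0 ⊢
    have hg0 : g ≠ 0 := fun h => hf0 (by rw [h, map_zero])
    calc ∑ l, finrank K (LinearMap.ker (skewEval (T l) (mulXSub σ b g)))
        ≤ ∑ l, (finrank K (LinearMap.ker (skewEval (T l) g)) +
            finrank K (LinearMap.ker (T l - b • 1))) :=
          Finset.sum_le_sum fun l _ => by
            rw [skewEval_mulXSub (hT l)]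
            exact finrank_ker_comp_le _ _
      _ = ∑ l, finrank K (LinearMap.ker (skewEval (T l) g)) +
            ∑ l, finrank K (LinearMap.ker (T l - b • 1)) := Finset.sum_add_distrib
      _ < k + 1 := add_lt_add_of_lt_of_le (ih g hg hg0) (heig b)

end RootBound

section NormClasses

variable {K L ι : Type*} [Field K] [Field L] [Algebra K L] {σ : L ≃ₐ[K] L}

lemma norm_eq_of_mul_apply_eq [FiniteDimensional K L] {a b y : L} (hy : y ≠ 0)
    (h : a * σ y = b * y) : Algebra.norm K a = Algebra.norm K b := by
  have hnorm := congrArg (Algebra.norm K) h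
  rw [map_mul, map_mul, Algebra.norm_eq_of_algEquiv] at hnorm
  exact mul_right_cancel₀ (Algebra.norm_ne_zero_iff.2 hy) hnorm

lemma mem_ker_smul_sub_smul_one {a b y : L} :
    y ∈ LinearMap.ker (a • σ.toLinearMap - b • (1 : Module.End K L)) ↔ a * σ y = b * y := by
  simp [sub_eq_zero]

lemma finrank_ker_smul_sub_smul_one_le_one
    (hfix : ∀ x, σ x = x → x ∈ Set.range (algebraMap K L)) {a : L} (ha : a ≠ 0) (b : L) :
    finrank K (LinearMap.ker (a • σ.toLinearMap - b • (1 : Module.End K L))) ≤ 1 := by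
  by_cases hE : LinearMap.ker (a • σ.toLinearMap - b • (1 : Module.End K L)) = ⊥
  · rw [hE, finrank_bot]
    exact zero_le_one
  obtain ⟨z, hz, hz0⟩ := Submodule.exists_mem_ne_zero_of_ne_bot hE
  refine finrank_le_one ⟨z, hz⟩ fun ⟨y, hy⟩ => ?_
  rw [mem_ker_smul_sub_smul_one] at hz hy
  have hratio : σ (y / z) = y / z := by
    have hσz : σ z ≠ 0 := by simpa using hz0
    rw [map_div₀, div_eq_div_iff hσz hz0]
    refine mul_left_cancel₀ ha ?_
    linear_combination z * hy - y * hz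
  obtain ⟨c, hc⟩ := hfix _ hratio
  exact ⟨c, Subtype.ext (by simp [Algebra.smul_def, hc, hz0])⟩

lemma sum_finrank_ker_smul_sub_smul_one_le_one [FiniteDimensional K L] [Fintype ι]
    (hfix : ∀ x, σ x = x → x ∈ Set.range (algebraMap K L)) {a : ι → L} (ha : ∀ i, a i ≠ 0)
    (hnorm : Function.Injective fun i => Algebra.norm K (a i)) (b : L) :
    ∑ i, finrank K (LinearMap.ker (a i • σ.toLinearMap - b • (1 : Module.End K L))) ≤ 1 := by
  have norm_eq : ∀ i, LinearMap.ker (a i • σ.toLinearMap - b • (1 : Module.End K L)) ≠ ⊥ →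
      Algebra.norm K (a i) = Algebra.norm K b := fun i hi => by
    obtain ⟨y, hy, hy0⟩ := Submodule.exists_mem_ne_zero_of_ne_bot hi
    exact norm_eq_of_mul_apply_eq hy0 (mem_ker_smul_sub_smul_one.1 hy)
  by_cases hbot : ∀ i, LinearMap.ker (a i • σ.toLinearMap - b • (1 : Module.End K L)) = ⊥
  · rw [Finset.sum_eq_zero fun i _ => by rw [hbot i, finrank_bot]]
    exact zero_le_one
  obtain ⟨i, hi⟩ := not_forall.1 hbot
  rw [Fintype.sum_eq_single i]
  · exact finrank_ker_smul_sub_smul_one_le_one hfix (ha i) b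
  · intro l hli
    by_contra hl
    refine hli (hnorm ((norm_eq l fun h => hl ?_).trans (norm_eq i hi).symm))
    rw [h, finrank_bot]

end NormClasses

lemma mem_range_algebraMap_of_frobenius_eq {K L : Type*} [Field K] [Fintype K] [Field L]
    [Finite L] [Algebra K L] {x : L}
    (hx : FiniteField.frobeniusAlgEquivOfAlgebraic K L x = x) :
    x ∈ Set.range (algebraMap K L) := by
  refine (IsGalois.mem_range_algebraMap_iff_fixed x).2 fun τ => ?_
  obtain ⟨s, rfl⟩ := (FiniteField.bijective_frobeniusAlgEquivOfAlgebraic_pow K L).2 τ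
  rw [AlgEquiv.coe_pow]
  exact Function.IsFixedPt.iterate hx _

lemma exists_norm_injective (K L : Type*) [Field K] [Fintype K] [Field L] [Finite L]
    [Algebra K L] {r : ℕ} (hr : r < Fintype.card K) :
    ∃ a : Fin r → L, (∀ i, a i ≠ 0) ∧ Function.Injective fun i => Algebra.norm K (a i) := by
  obtain ⟨e⟩ : Nonempty (Fin r ↪ Kˣ) := by
    classical
    apply Function.Embedding.nonempty_of_card_le
    rw [Fintype.card_fin, Fintype.card_units]
    exact Nat.le_sub_one_of_lt hr
  choose a ha using fun i => FiniteField.norm_surjective K L (e i : K)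
  refine ⟨a, fun i hi => (e i).ne_zero ?_, fun i l hil => e.injective (Units.ext ?_)⟩
  · rw [← ha, hi, Algebra.norm_zero]
  · rw [← ha, ← ha]
    exact hil

theorem exists_isRootBounded (K : Type*) [Field K] [Fintype K] {r M : ℕ} (hM : 0 < M)
    (hr : r < Fintype.card K) :
    ∃ (L : Type) (_ : Field L) (_ : Algebra K L) (_ : FiniteDimensional K L)
      (T : Fin r → Module.End K L), finrank K L = M ∧ IsRootBounded T := by
  obtain ⟨p, hp⟩ := CharP.exists K
  have : Fact p.Prime := ⟨CharP.char_is_prime K p⟩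
  have : NeZero M := ⟨hM.ne'⟩
  let L := FiniteField.Extension K p M
  let σ := FiniteField.frobeniusAlgEquivOfAlgebraic K L
  obtain ⟨a, ha, hnorm⟩ := exists_norm_injective K L hr
  refine ⟨L, inferInstance, inferInstance, inferInstance, fun i => a i • σ.toLinearMap,
    FiniteField.finrank_extension K p M, ?_⟩
  refine isRootBounded_of_semilinear (σ := (σ : L →+* L)) (fun i c v => ?_) <|
    sum_finrank_ker_smul_sub_smul_one_le_one
      (fun x hx => mem_range_algebraMap_of_frobenius_eq hx) ha hnorm
  simp [mul_left_comm]

section LinearizedReedSolomon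

open Polynomial

lemma exists_ne_zero_skewEval_eq_zero {K L V S : Type*} [CommRing K] [Field L] [AddCommGroup V]
    [Module K V] [Module L V] [SMulCommClass K L V] [FiniteDimensional L V] [Fintype S]
    (T : S → Module.End K V) (y : S → V) {k : ℕ} (hk : Fintype.card S * finrank L V < k) :
    ∃ f ∈ degreeLT L k, f ≠ 0 ∧ ∀ s, skewEval (T s) f (y s) = 0 := by
  let ev : degreeLT L k →ₗ[L] S → V :=
    { toFun := fun f s => skewEval (T s) f.1 (y s)
      map_add' := fun f g => by ext s; simp
      map_smul' := fun c f => by ext s; simp }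
  have hker : LinearMap.ker ev ≠ ⊥ := by
    apply LinearMap.ker_ne_bot_of_finrank_lt
    rw [Module.finrank_pi_fintype, (degreeLTEquiv L k).finrank_eq, Module.finrank_fin_fun]
    simpa using hk
  obtain ⟨⟨f, hfk⟩, hf, hf0⟩ := Submodule.exists_mem_ne_zero_of_ne_bot hker
  exact ⟨f, hfk, by simpa using hf0, congrFun (LinearMap.mem_ker.1 hf)⟩

lemma le_rank_toMatrix'_add_finrank_ker {K U V : Type*} [Field K] [AddCommGroup U] [Module K U]
    [AddCommGroup V] [Module K V] [FiniteDimensional K U] {a b : ℕ} {φ : V →ₗ[K] (Fin a → K)}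
    (hφ : Function.Injective φ) {ψ : (Fin b → K) →ₗ[K] U} (hψ : Function.Injective ψ)
    (A : U →ₗ[K] V) :
    b ≤ (LinearMap.toMatrix' (φ ∘ₗ A ∘ₗ ψ)).rank + finrank K (LinearMap.ker A) := by
  have hker : finrank K (LinearMap.ker (φ ∘ₗ A ∘ₗ ψ)) ≤ finrank K (LinearMap.ker A) := by
    rw [LinearMap.ker_comp_of_ker_eq_bot _ (LinearMap.ker_eq_bot.2 hφ)]
    have := finrank_ker_comp_le A ψ
    rwa [LinearMap.ker_eq_bot.2 hψ, finrank_bot, add_zero] at this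
  have hrank : (LinearMap.toMatrix' (φ ∘ₗ A ∘ₗ ψ)).rank =
      finrank K (LinearMap.range (φ ∘ₗ A ∘ₗ ψ)) := by
    rw [Matrix.rank, ← Matrix.toLin'_apply', Matrix.toLin'_toMatrix']
  have hdim := LinearMap.finrank_range_add_finrank_ker (φ ∘ₗ A ∘ₗ ψ)
  rw [Module.finrank_fin_fun] at hdim
  omega

lemma srk_add_card_le_of_col_eq_zero {K : Type*} [Field K]
    {C : ∀ i : Fin t, Matrix (Fin (m i)) (Fin (n i)) K} (S : Finset (Σ i, Fin (n i)))
    (hS : ∀ s ∈ S, (C s.1).col s.2 = 0) : srk C + S.card ≤ ∑ i, n i := by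
  classical
  let free (i : Fin t) : Finset (Fin (n i)) := {c | (⟨i, c⟩ : Σ i, Fin (n i)) ∉ S}
  have hrank (i : Fin t) : (C i).rank ≤ (free i).card := by
    rw [← Matrix.rank_transpose]
    refine Matrix.rank_le_card_of_support_subset _ _ fun c hc => ?_
    simpa [free] using fun hcS => hc (hS ⟨i, c⟩ hcS)
  have hcompl : ∑ i, (free i).card = Sᶜ.card := by
    rw [← Finset.card_sigma]
    congr 1
    ext ⟨i, c⟩
    simp [free]
  calc srk C + S.card ≤ Sᶜ.card + S.card :=
        Nat.add_le_add_right ((Finset.sum_le_sum fun i _ => hrank i).trans_eq hcompl) _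
    _ = ∑ i, n i := by simp [Finset.card_compl_add_card]

variable {K L : Type*} [Field K] [Field L] [Algebra K L] {T : Fin t → Module.End K L}
  {φ : ∀ i, L →ₗ[K] (Fin (m i) → K)} {ψ : ∀ i, (Fin (n i) → K) →ₗ[K] L} {k : ℕ}

/-- The tuple of matrices of the operators `skewEval (T i) f`, where `ψ i` embeds `K ^ n i` into
the source `L` and `φ i` maps the target `L` to `K ^ m i`. -/
noncomputable def skewEncode (T : Fin t → Module.End K L) (φ : ∀ i, L →ₗ[K] (Fin (m i) → K))
    (ψ : ∀ i, (Fin (n i) → K) →ₗ[K] L) :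
    L[X] →ₗ[K] ∀ i, Matrix (Fin (m i)) (Fin (n i)) K where
  toFun f i := LinearMap.toMatrix' (φ i ∘ₗ skewEval (T i) f ∘ₗ ψ i)
  map_add' f g := by
    ext1 i
    simp [LinearMap.add_comp, LinearMap.comp_add]
  map_smul' c f := by
    ext1 i
    simp [LinearMap.smul_comp, LinearMap.comp_smul]

/-- The linearized Reed–Solomon code of the skew polynomials of degree less than `k`, with their
values expanded to matrices over `K`. -/
noncomputable def linearizedRS (T : Fin t → Module.End K L) (φ : ∀ i, L →ₗ[K] (Fin (m i) → K))
    (ψ : ∀ i, (Fin (n i) → K) →ₗ[K] L) (k : ℕ) :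
    Submodule K (∀ i, Matrix (Fin (m i)) (Fin (n i)) K) :=
  ((degreeLT L k).restrictScalars K).map (skewEncode T φ ψ)

lemma linearizedRS_mono : Monotone (linearizedRS T φ ψ) :=
  fun _ _ h => Submodule.map_mono (degreeLT_mono h)

lemma skewEncode_col_eq_zero {f : L[X]} {i : Fin t} {c : Fin (n i)}
    (hf : skewEval (T i) f (ψ i (Pi.single c 1)) = 0) : (skewEncode T φ ψ f i).col c = 0 := by
  ext r
  simp [skewEncode, LinearMap.toMatrix'_apply, hf]

lemma sum_lt_srk_skewEncode_add [FiniteDimensional K L] (hT : IsRootBounded T)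
    (hφ : ∀ i, Function.Injective (φ i)) (hψ : ∀ i, Function.Injective (ψ i)) {f : L[X]}
    (hf : f ∈ degreeLT L k) (hf0 : f ≠ 0) : ∑ i, n i < srk (skewEncode T φ ψ f) + k :=
  calc ∑ i, n i
      ≤ ∑ i, ((skewEncode T φ ψ f i).rank + finrank K (LinearMap.ker (skewEval (T i) f))) :=
        Finset.sum_le_sum fun i _ => le_rank_toMatrix'_add_finrank_ker (hφ i) (hψ i) _
    _ = srk (skewEncode T φ ψ f) + ∑ i, finrank K (LinearMap.ker (skewEval (T i) f)) :=
        Finset.sum_add_distrib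
    _ < srk (skewEncode T φ ψ f) + k := Nat.add_lt_add_left (hT k f hf hf0) _

lemma srk_zero : srk (0 : ∀ i, Matrix (Fin (m i)) (Fin (n i)) K) = 0 := by
  simp [srk]

lemma skewEncode_ne_zero [FiniteDimensional K L] (hT : IsRootBounded T)
    (hφ : ∀ i, Function.Injective (φ i)) (hψ : ∀ i, Function.Injective (ψ i))
    (hk : k ≤ ∑ i, n i) {f : L[X]} (hf : f ∈ degreeLT L k) (hf0 : f ≠ 0) :
    skewEncode T φ ψ f ≠ 0 := by
  intro h
  have := sum_lt_srk_skewEncode_add hT hφ hψ hf hf0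
  rw [h, srk_zero] at this
  omega

theorem finrank_linearizedRS [FiniteDimensional K L] (hT : IsRootBounded T)
    (hφ : ∀ i, Function.Injective (φ i)) (hψ : ∀ i, Function.Injective (ψ i))
    (hk : k ≤ ∑ i, n i) : finrank K (linearizedRS T φ ψ k) = k * finrank K L := by
  have hinj : Function.Injective
      ((skewEncode T φ ψ).domRestrict ((degreeLT L k).restrictScalars K)) := by
    refine (injective_iff_map_eq_zero _).2 fun f hf => ?_
    by_contra hf0
    exact skewEncode_ne_zero hT hφ hψ hk f.2 (by simpa using hf0) hf
  rw [linearizedRS, ← LinearMap.range_domRestrict, LinearMap.finrank_range_of_inj hinj,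
    (((Submodule.restrictScalarsEquiv K L L[X] (degreeLT L k)).trans
      (degreeLTEquiv L k)).restrictScalars K).finrank_eq, Module.finrank_pi_fintype]
  simp

theorem minDist_linearizedRS_add [FiniteDimensional K L] (hT : IsRootBounded T)
    (hφ : ∀ i, Function.Injective (φ i)) (hψ : ∀ i, Function.Injective (ψ i))
    (hk : k < ∑ i, n i) : minDist (linearizedRS T φ ψ (k + 1)) + k = ∑ i, n i := by
  have lower : ∀ f ∈ degreeLT L (k + 1), f ≠ 0 → ∑ i, n i - k ≤ srk (skewEncode T φ ψ f) :=
    fun f hf hf0 => by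
      have := sum_lt_srk_skewEncode_add hT hφ hψ hf hf0
      omega
  obtain ⟨S, -, hS⟩ := Finset.exists_subset_card_eq
    (s := (Finset.univ : Finset (Σ i, Fin (n i)))) (n := k) (by simpa using hk.le)
  obtain ⟨f, hf, hf0, hfS⟩ := exists_ne_zero_skewEval_eq_zero (L := L) (k := k + 1)
    (fun s : S => T s.1.1) (fun s => ψ s.1.1 (Pi.single s.1.2 1)) (by simp [hS])
  have upper : srk (skewEncode T φ ψ f) + k ≤ ∑ i, n i :=
    hS ▸ srk_add_card_le_of_col_eq_zero S fun s hs => skewEncode_col_eq_zero (hfS ⟨s, hs⟩)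
  have least : IsLeast {w | ∃ C ∈ linearizedRS T φ ψ (k + 1), C ≠ 0 ∧ srk C = w}
      (∑ i, n i - k) := by
    refine ⟨⟨skewEncode T φ ψ f, Submodule.mem_map_of_mem hf,
      skewEncode_ne_zero hT hφ hψ hk hf hf0, ?_⟩, ?_⟩
    · have := lower f hf hf0
      omega
    · rintro _ ⟨_, ⟨g, hg, rfl⟩, hg0, rfl⟩
      exact lower g hg fun h => hg0 (by rw [h, map_zero])
  rw [minDist, least.csInf_eq]
  omega

end LinearizedReedSolomon

lemma exists_sum_Iio_lt_le_sum_Iic {ι : Type*} [LinearOrder ι] [LocallyFiniteOrderBot ι]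
    [PredOrder ι] [Fintype ι] (v : ι → ℕ) {i : ℕ} (hi : 0 < i) (hle : i ≤ ∑ l, v l) :
    ∃ l, ∑ x ∈ Finset.Iio l, v x < i ∧ i ≤ ∑ x ∈ Finset.Iic l, v x := by
  have : Nonempty ι := by
    by_contra! hempty
    rw [Fintype.sum_empty] at hle
    omega
  have hlast : ∃ l, i ≤ ∑ x ∈ Finset.Iic l, v x := by
    obtain ⟨top, htop⟩ := Finite.exists_max (id : ι → ι)
    refine ⟨top, hle.trans_eq (Finset.sum_congr ?_ fun _ _ => rfl)⟩
    exact (Finset.eq_univ_of_forall fun x => Finset.mem_Iic.2 (htop x)).symm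
  obtain ⟨l, hl, hmin⟩ := exists_minimal_of_wellFoundedLT _ hlast
  refine ⟨l, ?_, hl⟩
  by_contra! hIio
  by_cases hbot : IsMin l
  · rw [Finset.Iio_eq_empty.2 hbot, Finset.sum_empty] at hIio
    omega
  · rw [← Finset.Iic_pred_eq_Iio_of_not_isMin hbot] at hIio
    exact hbot (Order.le_pred_iff_isMin.1 (hmin hIio (Order.pred_le l)))

theorem isMSRD_of_finrank_add {K : Type*} [Field K]
    {𝒞 : Submodule K (∀ i : Fin t, Matrix (Fin (m i)) (Fin (n i)) K)} {j : Fin t} {M : ℕ}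
    (hM : ∀ l, j ≤ l → m l = M) (hlow : ∑ l ∈ Finset.Iio j, n l < minDist 𝒞)
    (hle : minDist 𝒞 ≤ ∑ l, n l)
    (hdim : finrank K 𝒞 + M * minDist 𝒞 = M * (∑ l, n l + 1)) : IsMSRD 𝒞 := by
  obtain ⟨j', hj'_lt, hj'_le⟩ := exists_sum_Iio_lt_le_sum_Iic n (Nat.zero_lt_of_lt hlow) hle
  have hjj' : j ≤ j' := by
    by_contra! hlt
    have : ∑ l ∈ Finset.Iic j', n l ≤ ∑ l ∈ Finset.Iio j, n l :=
      Finset.sum_le_sum_of_subset fun l hl =>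
        Finset.mem_Iio.2 ((Finset.mem_Iic.1 hl).trans_lt hlt)
    omega
  obtain ⟨δ, hδ⟩ := Nat.exists_eq_add_of_lt hj'_lt
  have hIic : ∑ l ∈ Finset.Iic j', n l = ∑ l ∈ Finset.Iio j', n l + n j' := by
    rw [← Finset.Iio_insert, Finset.sum_insert (by simp), add_comm]
  have hIci : ∑ l ∈ Finset.Ici j', m l * n l = M * ∑ l ∈ Finset.Ici j', n l := by
    rw [Finset.mul_sum]
    exact Finset.sum_congr rfl fun l hl => by rw [hM l (hjj'.trans (Finset.mem_Ici.1 hl))]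
  have hsplit : ∑ l ∈ Finset.Iio j', n l + ∑ l ∈ Finset.Ici j', n l = ∑ l, n l := by
    rw [← Finset.sum_add_sum_compl (Finset.Iio j')]
    congr 2
    ext l
    simp
  refine ⟨j', δ, by omega, hδ, ?_⟩
  rw [hδ, ← hsplit] at hdim
  rw [hM j' hjj', hIci]
  linarith

/-- Let `j = min {i ∈ [t] : m i = m t}` and `d = n_1 + ⋯ + n_{j-1} + 1`. If `n i ≤ m t` for
all `i` and `q > t`, then there is a chain of MSRD codes
`𝒞_n ⊆ ⋯ ⊆ 𝒞_{d+1} ⊆ 𝒞_d ⊆ 𝕄` with `d(𝒞_i) = i` for all `d ≤ i ≤ n`. -/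
theorem exists_MSRD_chain (ht : 0 < t)
    (hm_mono : ∀ i j : Fin t, i ≤ j → m j ≤ m i)
    (hn_pos : ∀ i, 0 < n i) (hmn : ∀ i, n i ≤ m i)
    (j : Fin t) (hj_eq : m j = m ⟨t - 1, Nat.sub_lt ht Nat.one_pos⟩)
    (hj_min : ∀ i : Fin t, m i = m ⟨t - 1, Nat.sub_lt ht Nat.one_pos⟩ → j ≤ i)
    (hnm : ∀ i : Fin t, n i ≤ m ⟨t - 1, Nat.sub_lt ht Nat.one_pos⟩)
    (hq : t < Fintype.card F) :
    ∃ 𝒞 : ℕ → Submodule F (∀ i : Fin t, Matrix (Fin (m i)) (Fin (n i)) F),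
      (∀ i, ∑ l ∈ Finset.Iio j, n l + 1 ≤ i → i < ∑ l, n l → 𝒞 (i + 1) ≤ 𝒞 i) ∧
      (∀ i, ∑ l ∈ Finset.Iio j, n l + 1 ≤ i → i ≤ ∑ l, n l →
        IsMSRD (𝒞 i) ∧ minDist (𝒞 i) = i) := by
  set M := m ⟨t - 1, Nat.sub_lt ht Nat.one_pos⟩
  have hM_le (l : Fin t) : M ≤ m l := hm_mono _ _ (Nat.le_sub_one_of_lt l.2)
  have hM_eq (l : Fin t) (hl : j ≤ l) : m l = M :=
    ((hm_mono _ _ hl).trans_eq hj_eq).antisymm (hM_le l)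
  obtain ⟨L, _, _, _, T, hL, hT⟩ := exists_isRootBounded F ((hn_pos j).trans_le (hnm j)) hq
  have hφ (l : Fin t) : ∃ φ : L →ₗ[F] (Fin (m l) → F), Function.Injective φ :=
    finrank_le_iff_exists_linearMap.1 (by simpa [hL] using hM_le l)
  have hψ (l : Fin t) : ∃ ψ : (Fin (n l) → F) →ₗ[F] L, Function.Injective ψ :=
    finrank_le_iff_exists_linearMap.1 (by simpa [hL] using hnm l)
  choose φ hφ using hφ
  choose ψ hψ using hψ
  refine ⟨fun i => linearizedRS T φ ψ (∑ l, n l + 1 - i),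
    fun i _ _ => linearizedRS_mono (by omega), fun i hi_low hi_le => ?_⟩
  obtain ⟨k, hk⟩ := Nat.exists_eq_add_of_le hi_le
  have hdist := minDist_linearizedRS_add (k := k) hT hφ hψ (by omega)
  have hfin := finrank_linearizedRS (k := k + 1) hT hφ hψ (by omega)
  have hmin : minDist (linearizedRS T φ ψ (k + 1)) = i := by omega
  simp only [show ∑ l, n l + 1 - i = k + 1 by omega]
  refine ⟨isMSRD_of_finrank_add hM_eq (by omega) (by omega) ?_, hmin⟩
  rw [hfin, hL, hmin, hk]
  ring
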